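/- Achievability of the secrecy rate (rate part of Theorem 1): for all σ_b, σ_e with 0 < σ_b < σ_e and every ε > 0, there exist α > 0 and an integer r ≥ 2 such that the total secrecy rate of the binary partition chain αℤ/2αℤ/⋯/2^{r−1}αℤ satisfies Σ_{i=1}^{r−1} ( C(2^{i−1}α, σ_b) − C(2^{i−1}α, σ_e) ) > (1/2)·log( σ_e² / σ_b² ) − ε; that is, by scaling the top lattice and increasing the number of levels, the secrecy rate can be made arbitrarily close to (1/2)·log(σ_e²/σ_b²). -/

import Mathlib

open MeasureTheory Real Filter

/-- The Gaussian density with zero mean and standard deviation `σ`. -/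
noncomputable def gaussDen (σ x : ℝ) : ℝ :=
  (Real.sqrt (2 * Real.pi * σ ^ 2))⁻¹ * Real.exp (-x ^ 2 / (2 * σ ^ 2))

/-- The `αℤ`-aliased Gaussian density `f_{σ,α}(x) = Σ_{k∈ℤ} g_σ(x − kα)`. -/
noncomputable def aliasedDen (σ α x : ℝ) : ℝ := ∑' k : ℤ, gaussDen σ (x - (k : ℝ) * α)

/-- The differential entropy `h(α,σ)` of the `αℤ`-aliased Gaussian noise
on the fundamental region `[0, α)`. -/
noncomputable def aliasedEnt (α σ : ℝ) : ℝ :=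
  -∫ x in Set.Ico (0 : ℝ) α, aliasedDen σ α x * Real.log (aliasedDen σ α x)

/-- The capacity `C(α,σ) = h(α,σ) − h(2α,σ) + log 2` of the binary partition channel
`αℤ/2αℤ` with Gaussian noise of variance `σ²`. -/
noncomputable def partCap (α σ : ℝ) : ℝ :=
  aliasedEnt α σ - aliasedEnt (2 * α) σ + Real.log 2

/-!
The sum telescopes to `(h(α,σ_b) - h(α,σ_e)) + (h(2^{r-1}α,σ_e) - h(2^{r-1}α,σ_b))`.

Unfolding the integral over `[0, A)` to `ℝ` gives `h(A,σ) = -𝔼 log f_{σ,A}(X)` with `X ∼ N(0,σ²)`.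
As `A → ∞` the density `f_{σ,A}` converges to `g_σ`, so `h(A,σ)` tends to the entropy
`(1/2) log (2πeσ²)` of `X`, and the second bracket tends to `(1/2) log (σ_e²/σ_b²)`.

For the first bracket, `h(α,σ_e) ≤ log α` since the uniform density on `[0, α)` maximizes entropy,
while `h(α,σ_b)` nearly attains this for small `α` because `α f_{σ,α} ≤ exp (α²/(8σ²))`: averaging
`2 exp (-t²/(2σ²)) g_σ(y) ≤ g_σ(y + t) + g_σ(y - t)` over `0 ≤ t ≤ α/2` bounds `f_{σ,α}(x)` by its
mean over one period.
-/

open ProbabilityTheory Topology Bornology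

section Periodization

lemma hasSum_intervalIntegral_comp_add_int_mul {E : Type*} [NormedAddCommGroup E]
    [NormedSpace ℝ E] {A : ℝ} {f : ℝ → E} (hf : Integrable f) (hA : 0 < A) :
    HasSum (fun n : ℤ ↦ ∫ x in (0 : ℝ)..A, f (x + n * A)) (∫ x, f x) := by
  have hsum := ((hf.comp_mul_right' hA.ne').hasSum_intervalIntegral_comp_add_int).const_smul A
  rw [Measure.integral_comp_mul_right, abs_of_pos (inv_pos.2 hA), smul_inv_smul₀ hA.ne'] at hsum
  refine hsum.congr_fun fun n ↦ ?_
  have hscale := intervalIntegral.smul_integral_comp_mul_right (a := 0) (b := 1)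
    (fun x ↦ f (x + n * A)) A
  simpa only [add_mul, zero_mul, one_mul] using hscale.symm

lemma periodic_tsum_sub_int_mul {R M : Type*} [Ring R] [AddCommMonoid M] [TopologicalSpace M]
    (f : R → M) (A : R) :
    Function.Periodic (fun x ↦ ∑' k : ℤ, f (x - k * A)) A := by
  intro x
  beta_reduce
  rw [← (Equiv.addRight (1 : ℤ)).tsum_eq (fun k : ℤ ↦ f (x + A - k * A))]
  refine tsum_congr fun k ↦ congrArg f ?_
  simp only [Equiv.coe_addRight, Int.cast_add, Int.cast_one, add_one_mul,
    add_sub_add_right_eq_sub]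

lemma intervalIntegral_tsum_mul_periodic {𝕜 : Type*} [RCLike 𝕜] {A : ℝ} {f φ : ℝ → 𝕜}
    (hA : 0 < A) (hφ : Function.Periodic φ A) (hfφ : Integrable fun x ↦ f x * φ x) :
    ∫ x in (0 : ℝ)..A, (∑' k : ℤ, f (x - k * A)) * φ x = ∫ x, f x * φ x := by
  have hsum := hasSum_intervalIntegral_comp_add_int_mul hfφ hA
  have hsum_norm := (hasSum_intervalIntegral_comp_add_int_mul hfφ.norm hA).summable
  simp only [intervalIntegral.integral_of_le hA.le] at hsum hsum_norm ⊢
  rw [hsum.unique <| hasSum_integral_of_summable_integral_norm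
    (fun n : ℤ ↦ (hfφ.comp_add_right ((n : ℝ) * A)).integrableOn) hsum_norm]
  refine integral_congr_ae (ae_of_all _ fun x ↦ ?_)
  have hφ_shift (n : ℤ) : φ (x + n * A) = φ x := hφ.int_mul n x
  simp only [hφ_shift, tsum_mul_right]
  rw [← (Equiv.neg ℤ).tsum_eq]
  simp

end Periodization

lemma neg_setIntegral_mul_log_le_log_measureReal {Ω : Type*} [MeasurableSpace Ω] {μ : Measure Ω}
    {s : Set Ω} {p : Ω → ℝ} (hs₀ : μ s ≠ 0) (hs : μ s ≠ ⊤) (hp₀ : ∀ᵐ x ∂μ.restrict s, 0 ≤ p x)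
    (hp : IntegrableOn p s μ) (hplog : IntegrableOn (fun x ↦ p x * log (p x)) s μ)
    (hp_one : ∫ x in s, p x ∂μ = 1) :
    -∫ x in s, p x * log (p x) ∂μ ≤ log (μ.real s) := by
  have hμ : 0 < μ.real s := ENNReal.toReal_pos hs₀ hs
  have jensen := convexOn_mul_log.map_set_average_le continuous_mul_log.continuousOn
    isClosed_Ici hs₀ hs hp₀ hp hplog
  simp only [setAverage_eq, hp_one, smul_eq_mul, mul_one, log_inv] at jensen
  linarith [le_of_mul_le_mul_left jensen (inv_pos.2 hμ)]

section GaussianDensity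

variable {σ a x y : ℝ}

lemma gaussDen_eq_gaussianPDFReal (σ : ℝ) : gaussDen σ = gaussianPDFReal 0 (‖σ‖₊ ^ 2) := by
  ext x
  simp [gaussDen, gaussianPDFReal]

lemma gaussDen_pos (hσ : σ ≠ 0) (x : ℝ) : 0 < gaussDen σ x := by
  unfold gaussDen
  positivity

lemma continuous_gaussDen (σ : ℝ) : Continuous (gaussDen σ) := by
  unfold gaussDen
  fun_prop

lemma gaussDen_le_gaussDen_of_abs_le (σ : ℝ) (h : |x| ≤ |y|) : gaussDen σ y ≤ gaussDen σ x := by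
  have hsq : x ^ 2 ≤ y ^ 2 := sq_le_sq.2 h
  unfold gaussDen
  gcongr

lemma gaussDen_sub_le (σ x y : ℝ) :
    gaussDen σ (x - y) ≤ exp (x ^ 2 / (2 * σ ^ 2)) * gaussDen σ (y / 2) := by
  have hsq : -(x - y) ^ 2 ≤ x ^ 2 + -(y / 2) ^ 2 := by nlinarith [sq_nonneg (2 * x - y)]
  unfold gaussDen
  rw [mul_left_comm, ← exp_add, ← add_div]
  gcongr

lemma two_mul_exp_mul_gaussDen_le (σ y t : ℝ) :
    2 * exp (-t ^ 2 / (2 * σ ^ 2)) * gaussDen σ y ≤ gaussDen σ (y + t) + gaussDen σ (y - t) := by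
  have factor (s : ℝ) : gaussDen σ (y + s) =
      exp (-s ^ 2 / (2 * σ ^ 2)) * gaussDen σ y * exp (-(y * s / σ ^ 2)) := by
    unfold gaussDen
    rw [mul_left_comm, mul_assoc, mul_assoc, ← exp_add, ← exp_add]
    ring_nf
  have hcosh := one_le_cosh (y * t / σ ^ 2)
  rw [cosh_eq] at hcosh
  have hnonneg : 0 ≤ exp (-t ^ 2 / (2 * σ ^ 2)) * gaussDen σ y := by
    unfold gaussDen
    positivity
  rw [sub_eq_add_neg y t, factor t, factor (-t), neg_sq, mul_neg, neg_div (σ ^ 2) (y * t), neg_neg]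
  nlinarith

lemma summable_gaussDen_int_mul (hσ : σ ≠ 0) (ha : a ≠ 0) :
    Summable fun k : ℤ ↦ gaussDen σ (k * a) := by
  have hT : 0 < a ^ 2 / (2 * σ ^ 2) / π := by positivity
  refine ((summable_pow_mul_jacobiTheta₂_term_bound 0 hT 0).mul_left
    (√(2 * π * σ ^ 2))⁻¹).congr fun k ↦ ?_
  unfold gaussDen
  field_simp
  simp

lemma tendsto_gaussDen_cobounded (hσ : σ ≠ 0) : Tendsto (gaussDen σ) (cobounded ℝ) (𝓝 0) := by
  have hsq : Tendsto (fun x : ℝ ↦ ‖x‖ ^ 2 / (2 * σ ^ 2)) (cobounded ℝ) atTop :=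
    ((tendsto_pow_atTop two_ne_zero).comp tendsto_norm_cobounded_atTop).atTop_div_const
      (by positivity)
  have hexp := (tendsto_exp_neg_atTop_nhds_zero.comp hsq).const_mul (√(2 * π * σ ^ 2))⁻¹
  rw [mul_zero] at hexp
  exact hexp.congr fun x ↦ by simp [gaussDen, neg_div]

lemma log_gaussDen (hσ : σ ≠ 0) (x : ℝ) :
    log (gaussDen σ x) = -(1 / 2 * log (2 * π * σ ^ 2)) - x ^ 2 / (2 * σ ^ 2) := by
  unfold gaussDen
  rw [log_mul (by positivity) (exp_ne_zero _), log_exp, log_inv, log_sqrt (by positivity)]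
  ring

end GaussianDensity

/-- The law `N(0, σ²)` of the Gaussian noise with density `gaussDen σ`. Writing the variance as
`‖σ‖₊ ^ 2` makes it an element of `ℝ≥0` without a sign condition on `σ`. -/
noncomputable abbrev gaussNoise (σ : ℝ) : Measure ℝ := gaussianReal 0 (‖σ‖₊ ^ 2)

section GaussianNoise

variable {σ : ℝ}

lemma integral_gaussNoise (hσ : σ ≠ 0) (φ : ℝ → ℝ) :
    ∫ x, φ x ∂gaussNoise σ = ∫ x, gaussDen σ x * φ x := by
  rw [integral_gaussianReal_eq_integral_smul (by simpa using hσ), gaussDen_eq_gaussianPDFReal]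
  simp only [smul_eq_mul]

lemma integrable_gaussNoise_iff (hσ : σ ≠ 0) {φ : ℝ → ℝ} :
    Integrable φ (gaussNoise σ) ↔ Integrable fun x ↦ gaussDen σ x * φ x := by
  rw [gaussNoise, gaussianReal_of_var_ne_zero _ (by simpa using hσ),
    integrable_withDensity_iff_integrable_smul' (measurable_gaussianPDF _ _)
      (ae_of_all _ fun _ ↦ gaussianPDF_lt_top), gaussDen_eq_gaussianPDFReal]
  simp only [toReal_gaussianPDF, smul_eq_mul]

lemma integrable_sq_gaussNoise (σ : ℝ) : Integrable (fun x ↦ x ^ 2) (gaussNoise σ) :=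
  (memLp_id_gaussianReal 2).integrable_sq

lemma integral_sq_gaussNoise (σ : ℝ) : ∫ x, x ^ 2 ∂gaussNoise σ = σ ^ 2 := by
  have hvar := variance_fun_id_gaussianReal (μ := 0) (v := ‖σ‖₊ ^ 2)
  rw [variance_eq_integral (by fun_prop)] at hvar
  simpa using hvar

lemma integrable_log_gaussDen (hσ : σ ≠ 0) :
    Integrable (fun x ↦ log (gaussDen σ x)) (gaussNoise σ) := by
  simp only [log_gaussDen hσ]
  exact (integrable_const _).sub ((integrable_sq_gaussNoise σ).div_const _)

lemma integral_log_gaussDen (hσ : σ ≠ 0) :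
    ∫ x, log (gaussDen σ x) ∂gaussNoise σ = -(1 / 2 * log (2 * π * σ ^ 2) + 1 / 2) := by
  simp only [log_gaussDen hσ]
  rw [integral_sub (integrable_const _) ((integrable_sq_gaussNoise σ).div_const _),
    integral_div, integral_sq_gaussNoise, integral_const, probReal_univ, one_smul]
  field_simp
  ring

end GaussianNoise

section AliasedDensity

variable {σ a A : ℝ}

lemma summable_gaussDen_sub_int_mul (hσ : σ ≠ 0) (hA : A ≠ 0) (x : ℝ) :
    Summable fun k : ℤ ↦ gaussDen σ (x - k * A) := by
  refine .of_nonneg_of_le (fun _ ↦ (gaussDen_pos hσ _).le) (fun _ ↦ gaussDen_sub_le σ x _) ?_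
  simpa only [mul_div_assoc] using
    (summable_gaussDen_int_mul hσ (div_ne_zero hA two_ne_zero)).mul_left _

lemma gaussDen_le_aliasedDen (hσ : σ ≠ 0) (hA : A ≠ 0) (x : ℝ) :
    gaussDen σ x ≤ aliasedDen σ A x := by
  simpa [aliasedDen] using
    (summable_gaussDen_sub_int_mul hσ hA x).le_tsum 0 fun _ _ ↦ (gaussDen_pos hσ _).le

lemma aliasedDen_pos (hσ : σ ≠ 0) (hA : A ≠ 0) (x : ℝ) : 0 < aliasedDen σ A x :=
  (gaussDen_pos hσ x).trans_le (gaussDen_le_aliasedDen hσ hA x)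

lemma periodic_aliasedDen (σ A : ℝ) : Function.Periodic (aliasedDen σ A) A :=
  periodic_tsum_sub_int_mul (gaussDen σ) A

lemma continuous_aliasedDen (hσ : σ ≠ 0) (hA : A ≠ 0) : Continuous (aliasedDen σ A) := by
  have hcont (R : ℝ) : ContinuousOn (aliasedDen σ A) (Set.Icc (-R) R) := by
    refine continuousOn_tsum (fun k ↦ ((continuous_gaussDen σ).comp (by fun_prop)).continuousOn)
      ((summable_gaussDen_int_mul hσ (div_ne_zero hA two_ne_zero)).mul_left
        (exp (R ^ 2 / (2 * σ ^ 2))))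
      fun k x hx ↦ ?_
    have hxR : x ^ 2 ≤ R ^ 2 := sq_le_sq' hx.1 hx.2
    have hpos := gaussDen_pos hσ (k * (A / 2))
    rw [norm_of_nonneg (gaussDen_pos hσ _).le]
    refine (gaussDen_sub_le σ x (k * A)).trans ?_
    rw [mul_div_assoc]
    gcongr
  refine continuous_iff_continuousAt.2 fun x ↦ (hcont (|x| + 1)).continuousAt (Icc_mem_nhds ?_ ?_)
  · linarith [neg_abs_le x]
  · linarith [le_abs_self x]

lemma intervalIntegral_aliasedDen_mul (hσ : σ ≠ 0) (hA : 0 < A) {φ : ℝ → ℝ}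
    (hφ : Function.Periodic φ A) (hφ_int : Integrable φ (gaussNoise σ)) :
    ∫ x in (0 : ℝ)..A, aliasedDen σ A x * φ x = ∫ x, φ x ∂gaussNoise σ := by
  rw [integral_gaussNoise hσ]
  exact intervalIntegral_tsum_mul_periodic hA hφ ((integrable_gaussNoise_iff hσ).1 hφ_int)

lemma intervalIntegral_aliasedDen (hσ : σ ≠ 0) (hA : 0 < A) (t : ℝ) :
    ∫ x in t..t + A, aliasedDen σ A x = 1 := by
  rw [(periodic_aliasedDen σ A).intervalIntegral_add_eq t 0, zero_add]
  simpa using intervalIntegral_aliasedDen_mul hσ hA (φ := fun _ ↦ 1) (fun _ ↦ rfl)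
    (integrable_const 1)

lemma two_mul_exp_mul_aliasedDen_le (hσ : σ ≠ 0) (hA : A ≠ 0) (x t : ℝ) :
    2 * exp (-t ^ 2 / (2 * σ ^ 2)) * aliasedDen σ A x ≤
      aliasedDen σ A (x + t) + aliasedDen σ A (x - t) := by
  have hsum := summable_gaussDen_sub_int_mul hσ hA
  unfold aliasedDen
  rw [← tsum_mul_left, ← (hsum (x + t)).tsum_add (hsum (x - t))]
  refine ((hsum x).mul_left _).tsum_le_tsum (fun k ↦ ?_) ((hsum (x + t)).add (hsum (x - t)))
  rw [add_sub_right_comm, sub_right_comm x t]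
  exact two_mul_exp_mul_gaussDen_le σ (x - k * A) t

lemma intervalIntegral_aliasedDen_add_sub_le_one (hσ : σ ≠ 0) (ha : 0 ≤ a) (haA : 2 * a ≤ A)
    (hA : 0 < A) (x : ℝ) :
    ∫ t in (0 : ℝ)..a, (aliasedDen σ A (x + t) + aliasedDen σ A (x - t)) ≤ 1 := by
  have hcont := continuous_aliasedDen hσ hA.ne'
  have hint (u v : ℝ) : IntervalIntegrable (aliasedDen σ A) volume u v :=
    hcont.intervalIntegrable u v
  calc ∫ t in (0 : ℝ)..a, (aliasedDen σ A (x + t) + aliasedDen σ A (x - t))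
      = ∫ y in x - a..x + a, aliasedDen σ A y := by
        rw [intervalIntegral.integral_add (Continuous.intervalIntegrable (by fun_prop) _ _)
            (Continuous.intervalIntegrable (by fun_prop) _ _),
          intervalIntegral.integral_comp_add_left, intervalIntegral.integral_comp_sub_left,
          add_zero, sub_zero, add_comm,
          intervalIntegral.integral_add_adjacent_intervals (hint _ _) (hint _ _)]
    _ ≤ ∫ y in x - a..x - a + A, aliasedDen σ A y :=
        intervalIntegral.integral_mono_interval le_rfl (by linarith) (by linarith)
          (ae_of_all _ fun y ↦ (aliasedDen_pos hσ hA.ne' y).le) (hint _ _)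
    _ = 1 := intervalIntegral_aliasedDen hσ hA (x - a)

lemma aliasedDen_le_exp_div (hσ : σ ≠ 0) (ha : 0 < a) (haA : a ≤ A) (x : ℝ) :
    aliasedDen σ A x ≤ exp (a ^ 2 / (8 * σ ^ 2)) / a := by
  have hA : 0 < A := ha.trans_le haA
  have hpos := aliasedDen_pos hσ hA.ne' x
  have hcont := continuous_aliasedDen hσ hA.ne'
  have hmean : a * (exp (-(a ^ 2 / (8 * σ ^ 2))) * aliasedDen σ A x) ≤ 1 :=
    calc a * (exp (-(a ^ 2 / (8 * σ ^ 2))) * aliasedDen σ A x)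
        = ∫ _ in (0 : ℝ)..a / 2, 2 * exp (-(a / 2) ^ 2 / (2 * σ ^ 2)) * aliasedDen σ A x := by
          rw [intervalIntegral.integral_const, smul_eq_mul]
          ring_nf
      _ ≤ ∫ t in (0 : ℝ)..a / 2, (aliasedDen σ A (x + t) + aliasedDen σ A (x - t)) := by
          refine intervalIntegral.integral_mono_on (by linarith) (by simp)
            (Continuous.intervalIntegrable (by fun_prop) _ _) fun t ⟨ht₀, hta⟩ ↦ ?_
          refine le_trans ?_ (two_mul_exp_mul_aliasedDen_le hσ hA.ne' x t)
          gcongr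
      _ ≤ 1 := intervalIntegral_aliasedDen_add_sub_le_one hσ (by linarith) (by linarith) hA x
  rw [exp_neg] at hmean
  rw [le_div_iff₀ ha]
  field_simp at hmean
  linarith

lemma tendsto_aliasedDen_atTop (hσ : σ ≠ 0) (x : ℝ) :
    Tendsto (fun A ↦ aliasedDen σ A x) atTop (𝓝 (gaussDen σ x)) := by
  rw [← tsum_ite_eq (0 : ℤ) (fun _ ↦ gaussDen σ x)]
  refine tendsto_tsum_of_dominated_convergence ((summable_gaussDen_int_mul hσ
    (div_ne_zero one_ne_zero two_ne_zero)).mul_left (exp (x ^ 2 / (2 * σ ^ 2)))) (fun k ↦ ?_) ?_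
  · rcases eq_or_ne k 0 with rfl | hk
    · simp
    · have hk' : (k : ℝ) ≠ 0 := Int.cast_ne_zero.2 hk
      simp only [hk, if_false]
      exact (tendsto_gaussDen_cobounded hσ).comp <| (tendsto_const_sub_cobounded x).comp <|
        (tendsto_mul_left_cobounded hk').comp <|
          tendsto_id.mono_left IsOrderBornology.atTop_le_cobounded
  · filter_upwards [eventually_ge_atTop 1] with A hA k
    rw [norm_of_nonneg (gaussDen_pos hσ _).le]
    refine (gaussDen_sub_le σ x (k * A)).trans ?_
    gcongr
    refine gaussDen_le_gaussDen_of_abs_le σ ?_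
    rw [mul_div_assoc, abs_mul, abs_mul]
    gcongr

end AliasedDensity

section AliasedEntropy

variable {σ a A : ℝ}

lemma abs_log_aliasedDen_le (hσ : σ ≠ 0) (ha : 0 < a) (haA : a ≤ A) (x : ℝ) :
    |log (aliasedDen σ A x)| ≤ |log (gaussDen σ x)| + |log (exp (a ^ 2 / (8 * σ ^ 2)) / a)| := by
  have hA : A ≠ 0 := (ha.trans_le haA).ne'
  refine (abs_le_max_abs_abs
    (log_le_log (gaussDen_pos hσ x) (gaussDen_le_aliasedDen hσ hA x))
    (log_le_log (aliasedDen_pos hσ hA x) (aliasedDen_le_exp_div hσ ha haA x))).trans ?_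
  exact max_le_add_of_nonneg (abs_nonneg _) (abs_nonneg _)

lemma continuous_log_aliasedDen (hσ : σ ≠ 0) (hA : A ≠ 0) :
    Continuous fun x ↦ log (aliasedDen σ A x) :=
  (continuous_aliasedDen hσ hA).log fun x ↦ (aliasedDen_pos hσ hA x).ne'

lemma integrable_log_aliasedDen (hσ : σ ≠ 0) (hA : 0 < A) :
    Integrable (fun x ↦ log (aliasedDen σ A x)) (gaussNoise σ) :=
  ((integrable_log_gaussDen hσ).abs.add (integrable_const _)).mono'
    (continuous_log_aliasedDen hσ hA.ne').aestronglyMeasurable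
    (ae_of_all _ fun x ↦ abs_log_aliasedDen_le hσ hA le_rfl x)

lemma aliasedEnt_eq_neg_integral_log (hσ : σ ≠ 0) (hA : 0 < A) :
    aliasedEnt A σ = -∫ x, log (aliasedDen σ A x) ∂gaussNoise σ := by
  rw [aliasedEnt, integral_Ico_eq_integral_Ioc, ← intervalIntegral.integral_of_le hA.le]
  exact congrArg Neg.neg <| intervalIntegral_aliasedDen_mul hσ hA
    ((periodic_aliasedDen σ A).comp log) (integrable_log_aliasedDen hσ hA)

lemma log_sub_le_aliasedEnt (hσ : σ ≠ 0) (hA : 0 < A) :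
    log A - A ^ 2 / (8 * σ ^ 2) ≤ aliasedEnt A σ := by
  have hlog (x : ℝ) : log (aliasedDen σ A x) ≤ A ^ 2 / (8 * σ ^ 2) - log A := by
    rw [← log_exp (A ^ 2 / (8 * σ ^ 2)), ← log_div (exp_ne_zero _) hA.ne']
    exact log_le_log (aliasedDen_pos hσ hA.ne' x) (aliasedDen_le_exp_div hσ hA le_rfl x)
  have hint := integral_mono (integrable_log_aliasedDen hσ hA) (integrable_const _) hlog
  rw [integral_const, probReal_univ, one_smul] at hint
  rw [aliasedEnt_eq_neg_integral_log hσ hA]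
  linarith

lemma aliasedEnt_le_log (hσ : σ ≠ 0) (hA : 0 < A) : aliasedEnt A σ ≤ log A := by
  have hcont := continuous_aliasedDen hσ hA.ne'
  have hint {f : ℝ → ℝ} (hf : Continuous f) : IntegrableOn f (Set.Ico 0 A) :=
    hf.integrableOn_Icc.mono_set Set.Ico_subset_Icc_self
  have hone : ∫ x in Set.Ico 0 A, aliasedDen σ A x = 1 := by
    rw [integral_Ico_eq_integral_Ioc, ← intervalIntegral.integral_of_le hA.le]
    simpa using intervalIntegral_aliasedDen hσ hA 0
  simpa [aliasedEnt, hA.le] using neg_setIntegral_mul_log_le_log_measureReal (by simpa using hA)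
    (by simp) (ae_of_all _ fun x ↦ (aliasedDen_pos hσ hA.ne' x).le) (hint hcont)
    (hint (continuous_mul_log.comp hcont)) hone

lemma tendsto_aliasedEnt_atTop (hσ : σ ≠ 0) :
    Tendsto (fun A ↦ aliasedEnt A σ) atTop (𝓝 (1 / 2 * log (2 * π * σ ^ 2) + 1 / 2)) := by
  have hbound := (integrable_log_gaussDen hσ).abs.add
    (integrable_const |log (exp (1 ^ 2 / (8 * σ ^ 2)) / 1)|)
  have hlim : Tendsto (fun A ↦ -∫ x, log (aliasedDen σ A x) ∂gaussNoise σ) atTop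
      (𝓝 (-∫ x, log (gaussDen σ x) ∂gaussNoise σ)) := by
    refine (tendsto_integral_filter_of_dominated_convergence _ ?_ ?_ hbound ?_).neg
    · filter_upwards [eventually_ne_atTop 0] with A hA
      exact (continuous_log_aliasedDen hσ hA).aestronglyMeasurable
    · filter_upwards [eventually_ge_atTop 1] with A hA
      exact ae_of_all _ fun x ↦ abs_log_aliasedDen_le hσ one_pos hA x
    · exact ae_of_all _ fun x ↦ (tendsto_aliasedDen_atTop hσ x).log (gaussDen_pos hσ x).ne'
  rw [integral_log_gaussDen hσ, neg_neg] at hlim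
  refine hlim.congr' ?_
  filter_upwards [eventually_gt_atTop 0] with A hA
  exact (aliasedEnt_eq_neg_integral_log hσ hA).symm

end AliasedEntropy

lemma sum_range_partCap (α σ : ℝ) (n : ℕ) :
    ∑ i ∈ Finset.range n, partCap (2 ^ i * α) σ =
      aliasedEnt α σ - aliasedEnt (2 ^ n * α) σ + n * log 2 := by
  simp only [partCap, ← mul_assoc, ← pow_succ', Finset.sum_add_distrib]
  rw [Finset.sum_range_sub' (fun i ↦ aliasedEnt (2 ^ i * α) σ)]
  simp

lemma tendsto_sum_range_partCap_sub {α σb σe : ℝ} (hα : 0 < α) (hσb : σb ≠ 0) (hσe : σe ≠ 0) :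
    Tendsto (fun n ↦ ∑ i ∈ Finset.range n, (partCap (2 ^ i * α) σb - partCap (2 ^ i * α) σe)) atTop
      (𝓝 (aliasedEnt α σb - aliasedEnt α σe + 1 / 2 * log (σe ^ 2 / σb ^ 2))) := by
  have hscale : Tendsto (fun n : ℕ ↦ 2 ^ n * α) atTop atTop :=
    (tendsto_pow_atTop_atTop_of_one_lt one_lt_two).atTop_mul_const hα
  have hlim := ((((tendsto_aliasedEnt_atTop hσe).sub (tendsto_aliasedEnt_atTop hσb)).comp
    hscale).const_add (aliasedEnt α σb - aliasedEnt α σe))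
  rw [log_mul (by positivity) (pow_ne_zero 2 hσe), log_mul (by positivity) (pow_ne_zero 2 hσb)]
    at hlim
  rw [log_div (by positivity) (by positivity)]
  convert hlim using 2 with n
  · simp only [Finset.sum_sub_distrib, sum_range_partCap, Function.comp_apply]
    ring
  · ring

theorem secrecy_rate_achievability_general {σb σe ε : ℝ} (hσb : 0 < σb) (hσe : 0 < σe)
    (hε : 0 < ε) :
    ∃ α > (0 : ℝ), ∃ r : ℕ, 2 ≤ r ∧
      ∑ i ∈ Finset.range (r - 1),
          (partCap ((2 : ℝ) ^ i * α) σb - partCap ((2 : ℝ) ^ i * α) σe) >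
        (1 / 2 : ℝ) * log (σe ^ 2 / σb ^ 2) - ε := by
  obtain ⟨α, hα, hα_loss⟩ : ∃ α > 0, α ^ 2 / (8 * σb ^ 2) < ε :=
    ⟨σb * √ε, by positivity, by rw [mul_pow, sq_sqrt hε.le]; field_simp; norm_num⟩
  have hfine : -ε < aliasedEnt α σb - aliasedEnt α σe := by
    linarith [log_sub_le_aliasedEnt hσb.ne' hα, aliasedEnt_le_log hσe.ne' hα]
  have hlim_gt : 1 / 2 * log (σe ^ 2 / σb ^ 2) - ε <
      aliasedEnt α σb - aliasedEnt α σe + 1 / 2 * log (σe ^ 2 / σb ^ 2) := by linarith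
  have hlim := tendsto_sum_range_partCap_sub hα hσb.ne' hσe.ne'
  obtain ⟨n, hn, hn_one⟩ :=
    ((hlim.eventually_const_lt hlim_gt).and (eventually_ge_atTop 1)).exists
  exact ⟨α, hα, n + 1, by lia, hn⟩

/-- achievability of the secrecy rate (rate part of Theorem 1): by scaling
the top lattice and increasing the number of levels, the total secrecy rate of the chain
`αℤ/2αℤ/⋯/2^{r−1}αℤ` can be made arbitrarily close to `(1/2)·log(σ_e²/σ_b²)`. -/
theorem secrecy_rate_achievability (σb σe : ℝ) (hσb : 0 < σb) (hbe : σb < σe)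
    (ε : ℝ) (hε : 0 < ε) :
    ∃ α > (0 : ℝ), ∃ r : ℕ, 2 ≤ r ∧
      ∑ i ∈ Finset.range (r - 1),
          (partCap ((2 : ℝ) ^ i * α) σb - partCap ((2 : ℝ) ^ i * α) σe) >
        (1 / 2 : ℝ) * Real.log (σe ^ 2 / σb ^ 2) - ε := by
  exact secrecy_rate_achievability_general hσb (hσb.trans hbe) hε
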